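/- Let λ be the partition associated to a gap sequence G of genus g, let 0 ≤ k ≤ g−1, and let μ=(μ_1,...,μ_g) be any partition with μ_i = λ_i for all k+1 ≤ i ≤ g. Then ∂_{a^{(k)}_1}⋯∂_{a^{(k)}_{m_k}} s_μ(t), evaluated at t = [x_1]+⋯+[x_k], equals c_k · s_{(μ_1,...,μ_k)}([x_1]+⋯+[x_k]), where c_k ∈ {±1} is the sign of the permutation of (g−k−1, ..., 1, 0) given by the tuple (w_1^*, ..., w_{m_k}^*, w_{g−k−m_k}, ..., w_1). -/

import Mathlib

open MvPolynomial

/-- The polynomial `p_n(t)` defined by `exp(Σ_{n≥1} t_n k^n) = Σ_{n≥0} p_n(t) k^n`,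
as a polynomial in the variables `t_1, t_2, ...` (variable `X n` stands for `t_n`). -/
noncomputable def pS (n : ℕ) : MvPolynomial ℕ ℚ :=
  ∑ m ∈ Finset.range (n + 1), (Nat.factorial m : ℚ)⁻¹ •
    ∑ c ∈ Finset.univ.filter
        (fun c : Fin m → Fin (n + 1) =>
          (∑ j, ((c j : ℕ))) = n ∧ ∀ j, 1 ≤ (c j : ℕ)),
      ∏ j, X ((c j : ℕ))

/-- `p_n` for `n : ℤ`, with `p_n = 0` for `n < 0`. -/
noncomputable def pz (n : ℤ) : MvPolynomial ℕ ℚ :=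
  if 0 ≤ n then pS n.toNat else 0

/-- The Schur function `s_λ(t) = det(p_{λ_i - i + j})_{1 ≤ i,j ≤ l}` (here `0`-indexed). -/
noncomputable def schur {l : ℕ} (lam : Fin l → ℕ) : MvPolynomial ℕ ℚ :=
  Matrix.det (Matrix.of fun a b : Fin l =>
    pz ((lam a : ℤ) - ((a : ℕ) : ℤ) + ((b : ℕ) : ℤ)))

/-- Substitution `t_n ↦ (x_1^n + ⋯ + x_k^n)/n`, i.e. `t = [x_1] + ⋯ + [x_k]`. -/
noncomputable def toPowerSums (k : ℕ) (f : MvPolynomial ℕ ℚ) : MvPolynomial (Fin k) ℚ :=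
  aeval (fun n : ℕ => (n : ℚ)⁻¹ • ∑ i : Fin k, X i ^ n) f

/-- Iterated partial derivative `∂_{i_1} ⋯ ∂_{i_r}` for a list `L = [i_1, ..., i_r]`. -/
noncomputable def derivs (L : List ℕ) (f : MvPolynomial ℕ ℚ) : MvPolynomial ℕ ℚ :=
  L.foldr (fun i g => pderiv i g) f

/-- The entries of a partition `λ` padded by zeros (`0`-indexed). -/
def pad {l : ℕ} (lam : Fin l → ℕ) (a : ℕ) : ℕ := if h : a < l then lam ⟨a, h⟩ else 0

/-- `w_i`: the `(i+1)`-st smallest element of `G` (0-indexed: `wseq G 0 = w_1`). -/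
def wseq (G : Finset ℕ) (i : ℕ) : ℕ := (G.sort (· ≤ ·)).getD i 0

/-- `w_i^*`: the `(i+1)`-st smallest element of the complement of `G`
(0-indexed: `wstar G 0 = w_1^* = 0`). -/
noncomputable def wstar (G : Finset ℕ) (i : ℕ) : ℕ := Nat.nth (fun n => n ∉ G) i

/-- `m_k = #{i : w_i^* < g - k}`, the number of non-gaps below `g - k`. -/
def gapm (G : Finset ℕ) (g k : ℕ) : ℕ :=
  ((Finset.range (g - k)).filter (fun n => n ∉ G)).card

/-- `a^{(k)}_{j+1} = w_{g-k-j} - w_{j+1}^*` (0-indexed in `j`, `0 ≤ j < m_k`). -/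
noncomputable def gapa (G : Finset ℕ) (g k j : ℕ) : ℕ :=
  wseq G (g - k - j - 1) - wstar G j

/-- The partition associated to the gap sequence `G`:
`λ = (w_g, ..., w_1) - (g-1, ..., 1, 0)`, i.e. `λ_{a+1} = w_{g-a} - (g-1-a)` (0-indexed `a`). -/
def gapPart (G : Finset ℕ) (g a : ℕ) : ℕ := wseq G (g - 1 - a) - (g - 1 - a)

/-! Write `s_μ` as a determinant in the beta numbers `l_i = μ_i + g - i`. The operator `∂_a` lowers
one beta number by `a`, in all possible ways. At `t = [x_1] + ⋯ + [x_k]` the generating series of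
the `p_n` is the inverse of `∏ (1 - x_i z)`, a polynomial of degree at most `k`; hence a determinant
vanishes unless all of `0, …, g-k-1` occur among its beta numbers. Those missing for `μ` are
`w_1^*, …, w_{m_k}^*`, so each of the `m_k` derivatives has to fill exactly one of them, and for
this it must lower a beta number `≥ g-k`. Taking the derivatives from `m_k` down to `1`, the `j`-th
one finds `l_1 > ⋯ > l_{k+j} ≥ g-k`, all others being `< g-k`. Since `l_{k+j} - a_j = w_j^*` is the
largest value still missing, only `l_{k+j}` can be lowered. In the surviving determinant the last
`g - k` beta numbers are a permutation of `g-k-1, …, 0`; sorting them produces the sign and a block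
triangular matrix. -/

open scoped PowerSeries LaurentSeries

section Derivations

variable {R A : Type*} [CommSemiring R] [CommRing A] [Algebra R A]

theorem derivation_prod {ι : Type*} [DecidableEq ι] (D : Derivation R A A) (s : Finset ι)
    (f : ι → A) : D (∏ i ∈ s, f i) = ∑ i ∈ s, D (f i) * ∏ j ∈ s.erase i, f j := by
  induction s using Finset.induction_on with
  | empty => simp
  | insert i s hi ih =>
    rw [Finset.prod_insert hi, D.leibniz, ih, Finset.sum_insert hi, Finset.erase_insert hi,
      smul_eq_mul, smul_eq_mul, Finset.mul_sum, add_comm, mul_comm (∏ j ∈ s, f j)]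
    congr 1
    refine Finset.sum_congr rfl fun j hj => ?_
    have hij : i ≠ j := fun h => hi (h ▸ hj)
    rw [Finset.erase_insert_of_ne hij, Finset.prod_insert (by simp [hi])]
    ring

theorem derivation_det {n : Type*} [Fintype n] [DecidableEq n] (D : Derivation R A A)
    (M : Matrix n n A) : D M.det = ∑ i, (M.updateRow i fun j => D (M i j)).det := by
  have det_rows : ∀ N : Matrix n n A,
      N.det = ∑ σ : Equiv.Perm n, Equiv.Perm.sign σ • ∏ i, N i (σ i) := fun N => by
    rw [← Matrix.det_transpose, Matrix.det_apply]
    rfl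
  simp only [det_rows]
  rw [map_sum, Finset.sum_comm]
  refine Finset.sum_congr rfl fun σ _ => ?_
  rw [← Finset.smul_sum, Units.smul_def, Units.smul_def, map_zsmul, derivation_prod]
  congr 1
  refine Finset.sum_congr rfl fun i _ => ?_
  rw [← Finset.mul_prod_erase _ _ (Finset.mem_univ i), Matrix.updateRow_self]
  congr 1
  refine Finset.prod_congr rfl fun j hj => ?_
  rw [Matrix.updateRow_ne (Finset.ne_of_mem_erase hj)]

/-- The derivation of `A⟦X⟧` that applies a derivation of `A` to every coefficient. -/
noncomputable def coeffwiseDerivation (D : Derivation R A A) : Derivation R A⟦X⟧ A⟦X⟧ :=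
  Derivation.mk'
    { toFun := fun f => PowerSeries.mk fun n => D (PowerSeries.coeff n f)
      map_add' := fun f g => by ext n; simp
      map_smul' := fun r f => by ext n; simp }
    fun f g => by
      ext n
      simp only [LinearMap.coe_mk, AddHom.coe_mk, smul_eq_mul, mul_comm g, map_add,
        PowerSeries.coeff_mul, PowerSeries.coeff_mk, map_sum, D.leibniz, Finset.sum_add_distrib,
        mul_comm (D _)]

@[simp]
theorem coeff_coeffwiseDerivation (D : Derivation R A A) (f : A⟦X⟧) (n : ℕ) :
    PowerSeries.coeff n (coeffwiseDerivation D f) = D (PowerSeries.coeff n f) :=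
  PowerSeries.coeff_mk n fun m => D (PowerSeries.coeff m f)

theorem X_pow_dvd_derivation_of_X_pow_succ_dvd (D : Derivation R A⟦X⟧ A⟦X⟧) {n : ℕ} {f : A⟦X⟧}
    (h : PowerSeries.X ^ (n + 1) ∣ f) : PowerSeries.X ^ n ∣ D f := by
  obtain ⟨f, rfl⟩ := h
  rw [D.leibniz, D.leibniz_pow, Nat.add_sub_cancel]
  refine dvd_add ((pow_dvd_pow _ n.le_succ).mul_right _) (dvd_smul_of_dvd f ?_)
  exact dvd_smul_of_dvd (n + 1) (dvd_mul_right _ _)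

end Derivations

section Exponential

variable {A : Type*} [CommRing A] [Algebra ℚ A] {T : A⟦X⟧}

theorem coeff_exp_subst (hT : PowerSeries.constantCoeff T = 0) {n N : ℕ} (h : n < N) :
    PowerSeries.coeff n ((PowerSeries.exp A).subst T) =
      PowerSeries.coeff n (∑ m ∈ Finset.range N, (m.factorial : ℚ)⁻¹ • T ^ m) := by
  have hvanish : ∀ m, n < m → PowerSeries.coeff n (T ^ m) = 0 := fun m hm =>
    PowerSeries.X_pow_dvd_iff.1 (pow_dvd_pow_of_dvd (PowerSeries.X_dvd_iff.2 hT) m) n hm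
  have hsupport : (Function.support fun m =>
      PowerSeries.coeff m (PowerSeries.exp A) • PowerSeries.coeff n (T ^ m)) ⊆
        Finset.range N := fun m hm => by
    by_contra hmN
    rw [Finset.mem_coe, Finset.mem_range, not_lt] at hmN
    exact hm (by simp only [hvanish m (h.trans_le hmN), smul_zero])
  rw [PowerSeries.coeff_subst' (PowerSeries.HasSubst.of_constantCoeff_zero' hT),
    finsum_eq_sum_of_support_subset _ hsupport, map_sum]
  simp only [PowerSeries.coeff_exp, one_div, PowerSeries.coeff_smul, algebraMap_smul]

theorem X_pow_dvd_exp_subst_sub (hT : PowerSeries.constantCoeff T = 0) (N : ℕ) :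
    PowerSeries.X ^ N ∣ (PowerSeries.exp A).subst T -
      ∑ m ∈ Finset.range N, (m.factorial : ℚ)⁻¹ • T ^ m :=
  PowerSeries.X_pow_dvd_iff.2 fun n hn => by rw [map_sub, coeff_exp_subst hT hn, sub_self]

theorem derivation_sum_inv_factorial_smul_pow {B : Type*} [CommRing B] [Algebra ℚ B]
    (D : Derivation ℚ B B) (b : B) (N : ℕ) :
    D (∑ m ∈ Finset.range (N + 1), (m.factorial : ℚ)⁻¹ • b ^ m) =
      (∑ m ∈ Finset.range N, (m.factorial : ℚ)⁻¹ • b ^ m) * D b := by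
  have hterm : ∀ m : ℕ, D (((m + 1).factorial : ℚ)⁻¹ • b ^ (m + 1)) =
      (m.factorial : ℚ)⁻¹ • b ^ m * D b := fun m => by
    have : (m.factorial : ℚ) ≠ 0 := by exact_mod_cast m.factorial_ne_zero
    rw [D.map_smul, D.leibniz_pow, Nat.add_sub_cancel, ← Nat.cast_smul_eq_nsmul ℚ, smul_smul,
      smul_eq_mul, smul_mul_assoc, Nat.factorial_succ]
    congr 1
    push_cast
    field_simp
  rw [Finset.sum_range_succ', pow_zero, map_add, D.map_smul, D.map_one_eq_zero, smul_zero, add_zero,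
    map_sum, Finset.sum_mul]
  exact Finset.sum_congr rfl fun m _ => hterm m

theorem derivation_exp_subst (hT : PowerSeries.constantCoeff T = 0)
    (D : Derivation ℚ A⟦X⟧ A⟦X⟧) :
    D ((PowerSeries.exp A).subst T) = (PowerSeries.exp A).subst T * D T := by
  set F := (PowerSeries.exp A).subst T
  set E : ℕ → A⟦X⟧ := fun N => ∑ m ∈ Finset.range N, (m.factorial : ℚ)⁻¹ • T ^ m
  ext n
  have hsplit : D F - F * D T = D (F - E (n + 2)) - (F - E (n + 1)) * D T := by
    rw [map_sub, derivation_sum_inv_factorial_smul_pow D T (n + 1)]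
    ring
  have hdvd : PowerSeries.X ^ (n + 1) ∣ D F - F * D T := hsplit ▸ dvd_sub
    (X_pow_dvd_derivation_of_X_pow_succ_dvd D (X_pow_dvd_exp_subst_sub hT _))
    (Dvd.dvd.mul_right (X_pow_dvd_exp_subst_sub hT _) _)
  rw [← sub_eq_zero, ← map_sub]
  exact PowerSeries.X_pow_dvd_iff.1 hdvd n n.lt_succ_self

end Exponential

section LaurentCoefficients

variable {R S : Type*} [CommRing R] [CommRing S]

theorem laurentCoeff_map (φ : R →+* S) (f : R⟦X⟧) (n : ℤ) :
    ((PowerSeries.map φ f : S⟦X⟧) : S⸨X⸩).coeff n = φ ((f : R⸨X⸩).coeff n) := by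
  simp only [PowerSeries.coeff_coe, PowerSeries.coeff_map, apply_ite φ, map_zero]

theorem laurentCoeff_mul_X_pow (f : R⟦X⟧) (a : ℕ) (n : ℤ) :
    ((f * PowerSeries.X ^ a : R⟦X⟧) : R⸨X⸩).coeff n = (f : R⸨X⸩).coeff (n - a) := by
  rw [PowerSeries.coe_mul, HahnSeries.ofPowerSeries_X_pow]
  simpa using HahnSeries.coeff_mul_single_add (x := (f : R⸨X⸩)) (r := (1 : R)) (a := n - a) (b := a)

theorem sum_laurentCoeff_mul_coeff (f : R⟦X⟧) (Q : Polynomial R) {g : ℕ} (hQ : Q.natDegree < g)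
    (n : ℤ) : ∑ s ∈ Finset.range g, (f : R⸨X⸩).coeff (n - s) * Q.coeff s =
      ((f * (Q : R⟦X⟧) : R⟦X⟧) : R⸨X⸩).coeff n := by
  conv_rhs => rw [Q.as_sum_range' g hQ]
  have hterm : ∀ s, f * ((Polynomial.monomial s (Q.coeff s) : Polynomial R) : R⟦X⟧) =
      Q.coeff s • (f * PowerSeries.X ^ s) := fun s => by
    rw [← Polynomial.C_mul_X_pow_eq_monomial, Polynomial.coe_mul, Polynomial.coe_C,
      Polynomial.coe_pow, Polynomial.coe_X, PowerSeries.smul_eq_C_mul]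
    ring
  rw [← Polynomial.coeToPowerSeries.ringHom_apply, map_sum, Finset.mul_sum]
  simp only [Polynomial.coeToPowerSeries.ringHom_apply, hterm, map_sum, HahnSeries.coeff_sum,
    PowerSeries.coe_smul, HahnSeries.coeff_smul, laurentCoeff_mul_X_pow, smul_eq_mul, mul_comm]

end LaurentCoefficients

section GeneratingSeries

/-- The power series `Σ_{n≥1} t_n z^n`. -/
noncomputable def timeSeries : (MvPolynomial ℕ ℚ)⟦X⟧ :=
  PowerSeries.mk fun n => if n = 0 then 0 else X n

/-- The generating series `exp(Σ_{n≥1} t_n z^n)` of the polynomials `p_n(t)`. -/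
noncomputable def pSeries : (MvPolynomial ℕ ℚ)⟦X⟧ :=
  (PowerSeries.exp (MvPolynomial ℕ ℚ)).subst timeSeries

theorem constantCoeff_timeSeries : PowerSeries.constantCoeff timeSeries = 0 := by
  simp [timeSeries, ← PowerSeries.coeff_zero_eq_constantCoeff_apply]

theorem coeff_timeSeries_pow (m n : ℕ) :
    PowerSeries.coeff n (timeSeries ^ m) =
      ∑ c ∈ Finset.univ.filter
        (fun c : Fin m → Fin (n + 1) => (∑ j, (c j : ℕ)) = n ∧ ∀ j, 1 ≤ (c j : ℕ)),
      ∏ j, (X (c j : ℕ) : MvPolynomial ℕ ℚ) := by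
  rw [← Fin.prod_const, PowerSeries.coeff_prod]
  symm
  refine Finset.sum_of_injOn
    (fun c : Fin m → Fin (n + 1) => Finsupp.equivFunOnFinite.symm fun j => (c j : ℕ))
    (fun c _ d _ h => ?_) (fun c hc => ?_) (fun d hd hd' => ?_) (fun c hc => ?_)
  · funext j
    simpa [Fin.ext_iff] using DFunLike.congr_fun h j
  · simp_all
  · obtain ⟨hsum, -⟩ := Finset.mem_finsuppAntidiag.1 hd
    obtain ⟨j, hj⟩ : ∃ j, d j = 0 := by
      by_contra! hpos
      have hle : ∀ j, d j < n + 1 := fun j => Nat.lt_succ_of_le <| hsum ▸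
        Finset.single_le_sum (f := fun j => d j) (fun _ _ => Nat.zero_le _) (Finset.mem_univ j)
      refine hd' ⟨fun j => ⟨d j, hle j⟩, ?_, by ext; simp⟩
      simpa [hsum, Nat.one_le_iff_ne_zero] using hpos
    exact Finset.prod_eq_zero (Finset.mem_univ j) (by simp [timeSeries, hj])
  · have hpos := (Finset.mem_filter.1 hc).2.2
    refine Finset.prod_congr rfl fun j _ => ?_
    simp [timeSeries, Nat.one_le_iff_ne_zero.1 (hpos j)]

theorem coeff_pSeries (n : ℕ) : PowerSeries.coeff n pSeries = pS n := by
  rw [pSeries, coeff_exp_subst constantCoeff_timeSeries n.lt_succ_self, map_sum, pS]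
  exact Finset.sum_congr rfl fun m _ => by rw [PowerSeries.coeff_smul, coeff_timeSeries_pow]

theorem constantCoeff_pSeries : PowerSeries.constantCoeff pSeries = 1 := by
  rw [← PowerSeries.coeff_zero_eq_constantCoeff_apply, coeff_pSeries]
  simp [pS]

theorem pz_eq_laurentCoeff (n : ℤ) : pz n = (pSeries : (MvPolynomial ℕ ℚ)⸨X⸩).coeff n := by
  rcases lt_or_ge n 0 with hn | hn
  · rw [PowerSeries.coeff_coe, pz, if_neg hn.not_ge, if_pos hn]
  · lift n to ℕ using hn
    simp [pz, PowerSeries.coeff_coe, coeff_pSeries]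

theorem coeffwiseDerivation_pderiv_timeSeries {a : ℕ} (ha : a ≠ 0) :
    coeffwiseDerivation (pderiv a) timeSeries = PowerSeries.X ^ a := by
  ext1 n
  rw [coeff_coeffwiseDerivation, timeSeries, PowerSeries.coeff_mk, PowerSeries.coeff_X_pow]
  by_cases hn : n = 0
  · simp [hn, ha.symm]
  · rw [if_neg hn, pderiv_X, Pi.single_apply]

theorem pderiv_laurentCoeff_pSeries {a : ℕ} (ha : a ≠ 0) (n : ℤ) :
    pderiv a ((pSeries : (MvPolynomial ℕ ℚ)⸨X⸩).coeff n) =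
      (pSeries : (MvPolynomial ℕ ℚ)⸨X⸩).coeff (n - a) := by
  rw [← laurentCoeff_mul_X_pow, ← coeffwiseDerivation_pderiv_timeSeries ha, pSeries,
    ← derivation_exp_subst constantCoeff_timeSeries]
  simp only [PowerSeries.coeff_coe, coeff_coeffwiseDerivation, apply_ite (pderiv a), map_zero]

end GeneratingSeries

section PowerSums

variable {B ι : Type*} [CommRing B] [Algebra ℚ B]

/-- The power series `Σ_{n≥1} (Σ_{i∈s} x_i^n) z^n / n`, that is `Σ_{i∈s} [x_i]` as a series in `z`.
The constant coefficient vanishes because `0⁻¹ = 0`. -/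
noncomputable def powerSumSeries (s : Finset ι) (x : ι → B) : B⟦X⟧ :=
  PowerSeries.mk fun n => (n : ℚ)⁻¹ • ∑ i ∈ s, x i ^ n

theorem constantCoeff_powerSumSeries (s : Finset ι) (x : ι → B) :
    PowerSeries.constantCoeff (powerSumSeries s x) = 0 := by
  simp [powerSumSeries, ← PowerSeries.coeff_zero_eq_constantCoeff_apply]

theorem derivative_powerSumSeries (s : Finset ι) (x : ι → B) :
    PowerSeries.derivative B (powerSumSeries s x) =
      ∑ i ∈ s, PowerSeries.mk fun n => x i ^ (n + 1) := by
  ext n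
  have h : ((n : B) + 1) = algebraMap ℚ B ((n + 1 : ℕ) : ℚ) := by simp
  rw [PowerSeries.coeff_derivative, powerSumSeries, PowerSeries.coeff_mk, h, mul_comm,
    ← Algebra.smul_def, smul_smul, mul_inv_cancel₀ (by positivity), one_smul, map_sum]
  simp only [PowerSeries.coeff_mk]

theorem one_sub_C_mul_X_mul_mk_pow_succ {R : Type*} [CommRing R] (x : R) :
    (1 - PowerSeries.C x * PowerSeries.X) * PowerSeries.mk (fun n => x ^ (n + 1)) =
      PowerSeries.C x := by
  ext n
  rw [sub_mul, one_mul, mul_assoc, map_sub, PowerSeries.coeff_C_mul]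
  cases n with
  | zero => simp
  | succ n => simp [PowerSeries.coeff_succ_X_mul, pow_succ']

theorem derivative_prod_one_sub (s : Finset ι) (x : ι → B) :
    PowerSeries.derivative B (∏ i ∈ s, (1 - PowerSeries.C (x i) * PowerSeries.X)) =
      -((∏ i ∈ s, (1 - PowerSeries.C (x i) * PowerSeries.X)) *
        PowerSeries.derivative B (powerSumSeries s x)) := by
  classical
  have hfactor : ∀ i, PowerSeries.derivative B (1 - PowerSeries.C (x i) * PowerSeries.X) =
      -((1 - PowerSeries.C (x i) * PowerSeries.X) * PowerSeries.mk fun n => x i ^ (n + 1)) :=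
    fun i => by
      rw [one_sub_C_mul_X_mul_mk_pow_succ, map_sub, PowerSeries.derivative_one,
        Derivation.leibniz, PowerSeries.derivative_C, PowerSeries.derivative_X]
      simp
  rw [derivation_prod, derivative_powerSumSeries, Finset.mul_sum, ← Finset.sum_neg_distrib]
  refine Finset.sum_congr rfl fun i hi => ?_
  rw [hfactor, ← Finset.mul_prod_erase s _ hi]
  ring

theorem exp_subst_powerSumSeries_mul_prod_one_sub (s : Finset ι) (x : ι → B) :
    (PowerSeries.exp B).subst (powerSumSeries s x) *
      ∏ i ∈ s, (1 - PowerSeries.C (x i) * PowerSeries.X) = 1 := by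
  have : IsAddTorsionFree B := .of_module_rat B
  have hT := constantCoeff_powerSumSeries s x
  apply PowerSeries.derivative.ext
  · rw [Derivation.leibniz, derivative_prod_one_sub, PowerSeries.derivative_one,
      PowerSeries.derivative_subst (PowerSeries.HasSubst.of_constantCoeff_zero' hT),
      PowerSeries.derivative_exp]
    simp only [smul_eq_mul]
    ring
  · rw [map_mul, map_prod, ← PowerSeries.coeff_zero_eq_constantCoeff_apply,
      coeff_exp_subst hT zero_lt_one]
    simp

end PowerSums

section BetaNumbers

variable {R S : Type*} [CommRing R] [CommRing S]

/-- The determinant `det(f_{l_i - (g - j)})_{1 ≤ i,j ≤ g}` in the coefficients of a power series `f`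
(zero at negative indices). For the generating series of the `p_n(t)` and the beta numbers
`l_i = λ_i + g - i` of a partition `λ` it is the Schur function `s_λ(t)`. -/
noncomputable def betaDet (f : R⟦X⟧) {g : ℕ} (l : Fin g → ℤ) : R :=
  Matrix.det (Matrix.of fun i j : Fin g => (f : R⸨X⸩).coeff (l i - (j.rev : ℕ)))

theorem map_betaDet (φ : R →+* S) (f : R⟦X⟧) {g : ℕ} (l : Fin g → ℤ) :
    φ (betaDet f l) = betaDet (PowerSeries.map φ f) l := by
  simp only [betaDet, laurentCoeff_map, φ.map_det]
  rfl

theorem derivation_betaDet {K : Type*} [CommSemiring K] [Algebra K R] (D : Derivation K R R)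
    {f : R⟦X⟧} {a : ℕ}
    (hD : ∀ n, D ((f : R⸨X⸩).coeff n) = (f : R⸨X⸩).coeff (n - a)) {g : ℕ} (l : Fin g → ℤ) :
    D (betaDet f l) = ∑ i, betaDet f (Function.update l i (l i - a)) := by
  rw [betaDet, derivation_det]
  refine Finset.sum_congr rfl fun i _ => congrArg Matrix.det ?_
  ext i' j
  rcases eq_or_ne i' i with rfl | hi
  · simp only [Matrix.updateRow_self, Matrix.of_apply, Function.update_self, hD, sub_right_comm]
  · simp only [Matrix.updateRow_ne hi, Matrix.of_apply, Function.update_of_ne hi]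

-- The coefficients of `X ^ c * E`, read backwards, are a kernel vector with a unit as an entry.
theorem betaDet_eq_zero {f : R⟦X⟧} {E : Polynomial R} (hfE : f * (E : R⟦X⟧) = 1) {g c : ℕ}
    (hc : E.natDegree + c < g) {l : Fin g → ℤ} (hl : ∀ i, l i ≠ c) : betaDet f l = 0 := by
  set Q : Polynomial R := Polynomial.X ^ c * E
  have hQ : Q.natDegree < g :=
    (Polynomial.natDegree_mul_le.trans
      (Nat.add_le_add_right (Polynomial.natDegree_X_pow_le c) _)).trans_lt (by omega)
  have hfQ : f * (Q : R⟦X⟧) = PowerSeries.X ^ c := by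
    rw [Polynomial.coe_mul, mul_left_comm, hfE, mul_one, Polynomial.coe_pow, Polynomial.coe_X]
  set M : Matrix (Fin g) (Fin g) R := .of fun i j => (f : R⸨X⸩).coeff (l i - (j.rev : ℕ))
  set w : Fin g → R := fun j => Q.coeff j.rev
  have hker : M.mulVec w = 0 := by
    funext i
    calc ∑ j : Fin g, (f : R⸨X⸩).coeff (l i - (j.rev : ℕ)) * Q.coeff j.rev
      _ = ∑ s : Fin g, (f : R⸨X⸩).coeff (l i - (s : ℕ)) * Q.coeff s :=
          Equiv.sum_comp Fin.revPerm fun s : Fin g => (f : R⸨X⸩).coeff (l i - (s : ℕ)) * Q.coeff s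
      _ = ∑ s ∈ Finset.range g, (f : R⸨X⸩).coeff (l i - s) * Q.coeff s :=
          Fin.sum_univ_eq_sum_range (fun s => (f : R⸨X⸩).coeff (l i - s) * Q.coeff s) g
      _ = 0 := by
          rw [sum_laurentCoeff_mul_coeff f Q hQ, hfQ, HahnSeries.ofPowerSeries_X_pow,
            HahnSeries.coeff_single_of_ne (hl i)]
  have hentry : w (Fin.rev ⟨c, by omega⟩) = E.coeff 0 := by
    simp only [w, Q, Fin.rev_rev, Polynomial.coeff_X_pow_mul', le_refl, if_true, Nat.sub_self]
  have hunit : IsUnit (E.coeff 0) := .of_mul_eq_one_right (PowerSeries.constantCoeff f) <| by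
    simpa using congrArg PowerSeries.constantCoeff hfE
  exact Matrix.det_eq_zero_of_mulVec_eq_zero_of_mem_nonZeroDivisors hker
    (hentry ▸ hunit.mem_nonZeroDivisors)

theorem betaDet_comp_perm (f : R⟦X⟧) {g : ℕ} (l : Fin g → ℤ) (σ : Equiv.Perm (Fin g)) :
    betaDet f (l ∘ σ) = (Equiv.Perm.sign σ : ℤ) * betaDet f l :=
  Matrix.det_permute σ (.of fun i j : Fin g => (f : R⸨X⸩).coeff (l i - (j.rev : ℕ)))

theorem betaDet_append_rev {f : R⟦X⟧} (hf : PowerSeries.constantCoeff f = 1) {k N : ℕ}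
    (l : Fin k → ℤ) :
    betaDet f (Fin.append l fun j : Fin N => ((j.rev : ℕ) : ℤ)) =
      betaDet f fun i => l i - N := by
  set M : Matrix (Fin (k + N)) (Fin (k + N)) R := .of fun i j =>
    (f : R⸨X⸩).coeff (Fin.append l (fun j : Fin N => ((j.rev : ℕ) : ℤ)) i - (j.rev : ℕ))
  set D : Matrix (Fin N) (Fin N) R := .of fun i j =>
    (f : R⸨X⸩).coeff ((i.rev : ℕ) - (j.rev : ℕ) : ℤ)
  have hD : D.det = 1 := by
    rw [Matrix.det_of_isUpperTriangular fun i j hij => ?_]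
    · simp [D, PowerSeries.coeff_coe, hf]
    · have : (i.rev : ℕ) < j.rev := Fin.rev_lt_rev.2 hij
      simp only [D, Matrix.of_apply, PowerSeries.coeff_coe]
      rw [if_pos (by omega)]
  have hM : M.submatrix finSumFinEquiv finSumFinEquiv = Matrix.fromBlocks
      (.of fun i j => (f : R⸨X⸩).coeff (l i - N - (j.rev : ℕ)))
      (.of fun i j => (f : R⸨X⸩).coeff (l i - (j.rev : ℕ))) 0 D := by
    have hrev_left (j : Fin k) : ((Fin.castAdd N j).rev : ℕ) = N + j.rev := by
      rw [Fin.rev_castAdd, Fin.val_addNat, add_comm]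
    have hrev_right (j : Fin N) : ((Fin.natAdd k j).rev : ℕ) = j.rev := by
      simp only [Fin.val_rev, Fin.val_natAdd]
      omega
    ext (i | i) (j | j)
    · simp [M, hrev_left, sub_sub, -Fin.val_rev]
    · simp [M, hrev_right, -Fin.val_rev]
    · have hneg : ¬ (N : ℤ) + (j.rev : ℕ) ≤ (i.rev : ℕ) := by omega
      simp [M, hrev_left, PowerSeries.coeff_coe, hneg, -Fin.val_rev]
    · simp [M, D, hrev_right, -Fin.val_rev]
  rw [betaDet, ← Matrix.det_submatrix_equiv_self finSumFinEquiv, hM, Matrix.det_fromBlocks_zero₂₁,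
    hD, mul_one]
  rfl

theorem betaDet_append_perm_rev {f : R⟦X⟧} (hf : PowerSeries.constantCoeff f = 1) {k N : ℕ}
    (l : Fin k → ℤ) (π : Equiv.Perm (Fin N)) :
    betaDet f (Fin.append l fun j => (((π j).rev : ℕ) : ℤ)) =
      (Equiv.Perm.sign π : ℤ) * betaDet f fun i => l i - N := by
  set σ : Equiv.Perm (Fin (k + N)) := finSumFinEquiv.permCongr (Equiv.Perm.sumCongr 1 π)
  have hσ : (Fin.append l fun j => (((π j).rev : ℕ) : ℤ)) =
      (Fin.append l fun j => ((j.rev : ℕ) : ℤ)) ∘ σ := by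
    funext i
    refine Fin.addCases (fun i => ?_) (fun i => ?_) i <;> simp [σ]
  rw [hσ, betaDet_comp_perm, betaDet_append_rev hf, Equiv.Perm.sign_permCongr,
    Equiv.Perm.sign_sumCongr, map_one, one_mul]

theorem betaDet_exp_subst_powerSumSeries_eq_zero [Algebra ℚ R] {ι : Type*} (s : Finset ι)
    (x : ι → R) {g c : ℕ} (hc : s.card + c < g) {l : Fin g → ℤ} (hl : ∀ i, l i ≠ c) :
    betaDet ((PowerSeries.exp R).subst (powerSumSeries s x)) l = 0 := by
  set E : Polynomial R := ∏ i ∈ s, (1 - Polynomial.C (x i) * Polynomial.X)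
  have hE : (E : R⟦X⟧) = ∏ i ∈ s, (1 - PowerSeries.C (x i) * PowerSeries.X) := by
    rw [← Polynomial.coeToPowerSeries.ringHom_apply, map_prod]
    simp
  have hdeg : E.natDegree ≤ s.card := by
    refine (Polynomial.natDegree_prod_le _ _).trans ?_
    rw [Finset.card_eq_sum_ones]
    exact Finset.sum_le_sum fun i _ => by compute_degree
  exact betaDet_eq_zero (hE ▸ exp_subst_powerSumSeries_mul_prod_one_sub s x)
    ((Nat.add_le_add_right hdeg c).trans_lt hc) hl

end BetaNumbers

section Specialization

theorem schur_eq_betaDet {g : ℕ} (mu : Fin g → ℕ) :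
    schur mu = betaDet pSeries fun i => (mu i : ℤ) + (i.rev : ℕ) := by
  rw [schur, betaDet]
  congr! 4 with i j
  rw [pz_eq_laurentCoeff, Fin.val_rev, Fin.val_rev]
  congr 1
  omega

/-- The substitution `t = [x_1] + ⋯ + [x_k]` as an algebra homomorphism. -/
noncomputable def powerSumHom (k : ℕ) : MvPolynomial ℕ ℚ →ₐ[ℚ] MvPolynomial (Fin k) ℚ :=
  aeval fun n : ℕ => (n : ℚ)⁻¹ • ∑ i : Fin k, X i ^ n

theorem toPowerSums_eq_powerSumHom (k : ℕ) : toPowerSums k = powerSumHom k := rfl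

theorem map_powerSumHom_pSeries (k : ℕ) :
    PowerSeries.map (powerSumHom k : MvPolynomial ℕ ℚ →+* MvPolynomial (Fin k) ℚ) pSeries =
      (PowerSeries.exp (MvPolynomial (Fin k) ℚ)).subst (powerSumSeries Finset.univ X) := by
  have hT : PowerSeries.map (powerSumHom k : MvPolynomial ℕ ℚ →+* MvPolynomial (Fin k) ℚ)
      timeSeries = powerSumSeries Finset.univ X := by
    ext1 n
    rw [PowerSeries.coeff_map, timeSeries, powerSumSeries, PowerSeries.coeff_mk,
      PowerSeries.coeff_mk]
    rcases eq_or_ne n 0 with rfl | hn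
    · simp
    · simp [hn, powerSumHom]
  rw [pSeries]
  refine (PowerSeries.map_subst
    (PowerSeries.HasSubst.of_constantCoeff_zero' constantCoeff_timeSeries) _).trans ?_
  rw [PowerSeries.map_exp]
  exact congrArg (fun T => PowerSeries.subst T _) hT

theorem powerSumHom_betaDet_eq_zero {g k c : ℕ} (hc : k + c < g) {l : Fin g → ℤ}
    (hl : ∀ i, l i ≠ c) : powerSumHom k (betaDet pSeries l) = 0 := by
  refine (map_betaDet (powerSumHom k : _ →+* MvPolynomial (Fin k) ℚ) pSeries l).trans ?_
  rw [map_powerSumHom_pSeries]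
  exact betaDet_exp_subst_powerSumSeries_eq_zero _ _ (by simpa using hc) hl

end Specialization

section IteratedDerivatives

theorem derivs_concat (L : List ℕ) (a : ℕ) (f : MvPolynomial ℕ ℚ) :
    derivs (L ++ [a]) f = derivs L (pderiv a f) := by
  simp only [derivs, List.foldr_append, List.foldr_cons, List.foldr_nil]

theorem derivs_sum {ι : Type*} (L : List ℕ) (s : Finset ι) (f : ι → MvPolynomial ℕ ℚ) :
    derivs L (∑ i ∈ s, f i) = ∑ i ∈ s, derivs L (f i) := by
  induction L with
  | nil => rfl
  | cons a L ih => exact (congrArg (pderiv a) ih).trans (map_sum _ _ _)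

theorem derivs_concat_betaDet (L : List ℕ) {a : ℕ} (ha : a ≠ 0) {g : ℕ} (l : Fin g → ℤ) :
    derivs (L ++ [a]) (betaDet pSeries l) =
      ∑ i, derivs L (betaDet pSeries (Function.update l i (l i - a))) := by
  rw [derivs_concat, derivation_betaDet _ (pderiv_laurentCoeff_pSeries ha), derivs_sum]

/-- The integers in `[0, N)` that do not occur among the beta numbers `l`. At `[x_1] + ⋯ + [x_k]`,
a determinant with `k + N` beta numbers vanishes unless this set is empty. -/
noncomputable def missing (N : ℕ) {g : ℕ} (l : Fin g → ℤ) : Finset ℤ :=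
  Finset.Ico 0 (N : ℤ) \ Finset.univ.image l

theorem mem_missing {N g : ℕ} {l : Fin g → ℤ} {c : ℤ} :
    c ∈ missing N l ↔ (0 ≤ c ∧ c < N) ∧ ∀ i, l i ≠ c := by
  simp [missing]

theorem missing_erase_subset_missing_update (N : ℕ) {g : ℕ} (l : Fin g → ℤ) (i : Fin g) (x : ℤ) :
    (missing N l).erase x ⊆ missing N (Function.update l i x) := by
  intro c hc
  obtain ⟨hcx, hc⟩ := Finset.mem_erase.1 hc
  obtain ⟨hcN, hlc⟩ := mem_missing.1 hc
  refine mem_missing.2 ⟨hcN, fun j => ?_⟩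
  rcases eq_or_ne j i with rfl | hj
  · rwa [Function.update_self, ne_comm]
  · rw [Function.update_of_ne hj]
    exact hlc j

theorem card_missing_le_card_missing_update {N g : ℕ} {l : Fin g → ℤ} (hl : Function.Injective l)
    {i : Fin g} {x : ℤ} (hx : x ≠ l i) (h : x ∈ missing N l → 0 ≤ l i ∧ l i < N) :
    (missing N l).card ≤ (missing N (Function.update l i x)).card := by
  have hsub := missing_erase_subset_missing_update N l i x
  by_cases hxl : x ∈ missing N l
  · have hnew : l i ∈ missing N (Function.update l i x) := by
      refine mem_missing.2 ⟨h hxl, fun j => ?_⟩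
      rcases eq_or_ne j i with rfl | hj
      · rwa [Function.update_self]
      · rw [Function.update_of_ne hj]
        exact hl.ne hj
    have hold : l i ∉ (missing N l).erase x := fun hmem =>
      (mem_missing.1 (Finset.mem_of_mem_erase hmem)).2 i rfl
    rw [← Finset.card_erase_add_one hxl, ← Finset.card_insert_of_notMem hold]
    exact Finset.card_le_card (Finset.insert_subset hnew hsub)
  · rw [Finset.erase_eq_of_notMem hxl] at hsub
    exact Finset.card_le_card hsub

-- Each derivative changes one beta number, so it fills at most one missing value.
theorem powerSumHom_derivs_betaDet_eq_zero {k N : ℕ} {L : List ℕ} (hL : ∀ a ∈ L, a ≠ 0)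
    {l : Fin (k + N) → ℤ} (hcard : L.length < (missing N l).card) :
    powerSumHom k (derivs L (betaDet pSeries l)) = 0 := by
  induction L using List.reverseRecOn generalizing l with
  | nil =>
    obtain ⟨c, hc⟩ := Finset.card_pos.1 hcard
    obtain ⟨⟨hc0, hcN⟩, hlc⟩ := mem_missing.1 hc
    lift c to ℕ using hc0
    exact powerSumHom_betaDet_eq_zero (by omega) hlc
  | append_singleton L a ih =>
    rw [derivs_concat_betaDet L (hL a (by simp)), map_sum]
    refine Finset.sum_eq_zero fun i _ => ih (fun b hb => hL b (by simp [hb])) ?_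
    rw [List.length_append, List.length_singleton] at hcard
    calc L.length < (missing N l).card - 1 := by omega
      _ ≤ ((missing N l).erase (l i - a)).card := Finset.pred_card_le_card_erase
      _ ≤ _ := Finset.card_le_card (missing_erase_subset_missing_update N l i _)

theorem powerSumHom_derivs_concat_betaDet {k N : ℕ} {L : List ℕ} (hL : ∀ b ∈ L, b ≠ 0) {a : ℕ}
    (ha : a ≠ 0) {l : Fin (k + N) → ℤ} (hl : Function.Injective l)
    (hcard : L.length < (missing N l).card) (i₀ : Fin (k + N))
    (h : ∀ i ≠ i₀, l i - a ∈ missing N l → l i < N) :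
    powerSumHom k (derivs (L ++ [a]) (betaDet pSeries l)) =
      powerSumHom k (derivs L (betaDet pSeries (Function.update l i₀ (l i₀ - a)))) := by
  rw [derivs_concat_betaDet L ha, map_sum]
  refine Finset.sum_eq_single_of_mem i₀ (Finset.mem_univ _) fun i _ hi => ?_
  refine powerSumHom_derivs_betaDet_eq_zero hL (hcard.trans_le ?_)
  refine card_missing_le_card_missing_update hl (by omega) fun hmem => ⟨?_, h i hi hmem⟩
  have := (mem_missing.1 hmem).1.1
  omega

end IteratedDerivatives

section Filling

variable {k N : ℕ} (l : Fin (k + N) → ℤ) (π : Equiv.Perm (Fin N))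

/-- The beta numbers `l_1, …, l_{k+n}, v_{n+1}, …, v_N`, where `v_j = N - 1 - π_j`: the last
`N - n` beta numbers have been moved to their final values. -/
def partlyFilled (n : ℕ) : Fin (k + N) → ℤ :=
  Fin.append (fun i => l (Fin.castAdd N i)) fun j =>
    if (j : ℕ) < n then l (Fin.natAdd k j) else ((π j).rev : ℕ)

variable {l π}

theorem partlyFilled_castAdd (n : ℕ) (i : Fin k) :
    partlyFilled l π n (Fin.castAdd N i) = l (Fin.castAdd N i) := Fin.append_left _ _ _

theorem partlyFilled_natAdd_of_lt {n : ℕ} {j : Fin N} (h : (j : ℕ) < n) :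
    partlyFilled l π n (Fin.natAdd k j) = l (Fin.natAdd k j) := by
  rw [partlyFilled, Fin.append_right, if_pos h]

theorem partlyFilled_natAdd_of_le {n : ℕ} {j : Fin N} (h : n ≤ j) :
    partlyFilled l π n (Fin.natAdd k j) = ((π j).rev : ℕ) := by
  rw [partlyFilled, Fin.append_right, if_neg h.not_gt]

theorem partlyFilled_of_lt {n : ℕ} {i : Fin (k + N)} (h : (i : ℕ) < k + n) :
    partlyFilled l π n i = l i := by
  induction i using Fin.addCases with
  | left i => exact partlyFilled_castAdd n i
  | right j => exact partlyFilled_natAdd_of_lt (by simpa using h)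

theorem update_partlyFilled (j : Fin N) :
    Function.update (partlyFilled l π (j + 1)) (Fin.natAdd k j) ((π j).rev : ℕ) =
      partlyFilled l π j := by
  funext i
  rcases eq_or_ne i (Fin.natAdd k j) with rfl | hi
  · rw [Function.update_self, partlyFilled_natAdd_of_le le_rfl]
  rw [Function.update_of_ne hi]
  induction i using Fin.addCases with
  | left i => rw [partlyFilled_castAdd, partlyFilled_castAdd]
  | right i =>
    have hij : (i : ℕ) ≠ j := fun h => hi (congrArg _ (Fin.ext h))
    rcases hij.lt_or_gt with h | h
    · rw [partlyFilled_natAdd_of_lt h, partlyFilled_natAdd_of_lt (Nat.lt_succ_of_lt h)]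
    · rw [partlyFilled_natAdd_of_le h.le, partlyFilled_natAdd_of_le h]

theorem exists_natAdd_eq_of_le {n : ℕ} {i : Fin (k + N)} (h : k + n ≤ i) :
    ∃ j : Fin N, n ≤ j ∧ Fin.natAdd k j = i :=
  ⟨⟨i - k, by omega⟩, by simp only; omega, Fin.ext (by simp only [Fin.val_natAdd]; omega)⟩

theorem partlyFilled_eq_rev_iff {n : ℕ} (hlN : ∀ i : Fin (k + N), (i : ℕ) < k + n → N ≤ l i)
    {i : Fin (k + N)} {j : Fin N} :
    partlyFilled l π n i = ((π j).rev : ℕ) ↔ i = Fin.natAdd k j ∧ n ≤ j := by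
  constructor
  · intro h
    rcases lt_or_ge (i : ℕ) (k + n) with hi | hi
    · rw [partlyFilled_of_lt hi] at h
      have := hlN i hi
      omega
    · obtain ⟨j', hj', rfl⟩ := exists_natAdd_eq_of_le hi
      rw [partlyFilled_natAdd_of_le hj', Nat.cast_inj, Fin.val_inj, Fin.rev_inj,
        π.injective.eq_iff] at h
      exact ⟨congrArg _ h, h ▸ hj'⟩
  · rintro ⟨rfl, hj⟩
    exact partlyFilled_natAdd_of_le hj

theorem partlyFilled_injective (hl : Function.Injective l) {n : ℕ}
    (hlN : ∀ i : Fin (k + N), (i : ℕ) < k + n → N ≤ l i) :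
    Function.Injective (partlyFilled l π n) := by
  have eq_of_le : ∀ i i' : Fin (k + N), k + n ≤ (i : ℕ) →
      partlyFilled l π n i = partlyFilled l π n i' → i = i' := fun i i' hi h => by
    obtain ⟨j, hj, rfl⟩ := exists_natAdd_eq_of_le hi
    rw [partlyFilled_natAdd_of_le hj] at h
    exact ((partlyFilled_eq_rev_iff hlN).1 h.symm).1.symm
  intro i i' h
  rcases lt_or_ge (i : ℕ) (k + n) with hi | hi
  · rcases lt_or_ge (i' : ℕ) (k + n) with hi' | hi'
    · exact hl (by rwa [partlyFilled_of_lt hi, partlyFilled_of_lt hi'] at h)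
    · exact (eq_of_le i' i hi' h.symm).symm
  · exact eq_of_le i i' hi h

theorem missing_partlyFilled {n : ℕ} (hlN : ∀ i : Fin (k + N), (i : ℕ) < k + n → N ≤ l i) :
    missing N (partlyFilled l π n) =
      (Finset.univ.filter fun j : Fin N => (j : ℕ) < n).image fun j => (((π j).rev : ℕ) : ℤ) := by
  ext c
  simp only [mem_missing, Finset.mem_image, Finset.mem_filter, Finset.mem_univ, true_and]
  constructor
  · rintro ⟨⟨hc0, hcN⟩, hc⟩
    lift c to ℕ using hc0
    refine ⟨π.symm (Fin.rev ⟨c, by omega⟩), ?_, by simp⟩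
    by_contra! h
    exact hc (Fin.natAdd k _) (by rw [partlyFilled_natAdd_of_le h]; simp)
  · rintro ⟨j, hj, rfl⟩
    exact ⟨by omega, fun i h => ((partlyFilled_eq_rev_iff hlN).1 h).2.not_gt hj⟩

theorem card_missing_partlyFilled {n : ℕ} (hn : n ≤ N)
    (hlN : ∀ i : Fin (k + N), (i : ℕ) < k + n → N ≤ l i) :
    (missing N (partlyFilled l π n)).card = n := by
  rw [missing_partlyFilled hlN, Finset.card_image_of_injective, Fin.card_filter_val_lt,
    min_eq_right hn]
  exact fun j j' h => by simpa [-Fin.val_rev, Fin.val_inj] using h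

theorem powerSumHom_derivs_concat_partlyFilled (hl : StrictAnti l) {L : List ℕ}
    (hL : ∀ b ∈ L, b ≠ 0) {j : Fin N} (hLj : L.length = j) {a : ℕ}
    (ha : (a : ℤ) = l (Fin.natAdd k j) - ((π j).rev : ℕ)) (hlN : N ≤ l (Fin.natAdd k j))
    (hπ : ∀ j' ≤ j, (π j').rev ≤ (π j).rev) :
    powerSumHom k (derivs (L ++ [a]) (betaDet pSeries (partlyFilled l π (j + 1)))) =
      powerSumHom k (derivs L (betaDet pSeries (partlyFilled l π j))) := by
  have hlarge : ∀ i : Fin (k + N), (i : ℕ) < k + (j + 1) → N ≤ l i := fun i hi =>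
    hlN.trans (hl.antitone (Fin.le_def.2 (by rw [Fin.val_natAdd]; omega)))
  have hval := partlyFilled_natAdd_of_lt (l := l) (π := π) (Nat.lt_succ_self (j : ℕ))
  rw [powerSumHom_derivs_concat_betaDet hL (by omega) (partlyFilled_injective hl.injective hlarge)
    (by rw [card_missing_partlyFilled j.isLt hlarge, hLj]; exact Nat.lt_succ_self _)
    (Fin.natAdd k j) fun i hi hmem => ?_, hval, ha, sub_sub_cancel, update_partlyFilled]
  by_contra! hNi
  rw [missing_partlyFilled hlarge] at hmem
  obtain ⟨j', hj', hij'⟩ := Finset.mem_image.1 hmem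
  have hj'j : (π j').rev ≤ (π j).rev := hπ j' (Nat.lt_succ_iff.1 (Finset.mem_filter.1 hj').2)
  rcases lt_or_ge (i : ℕ) (k + (j + 1)) with hij | hij
  · rw [partlyFilled_of_lt hij] at hij'
    have hli : l (Fin.natAdd k j) < l i := hl (lt_of_le_of_ne
      (Fin.le_def.2 (by rw [Fin.val_natAdd]; omega)) hi)
    omega
  · obtain ⟨i, hi', rfl⟩ := exists_natAdd_eq_of_le hij
    rw [partlyFilled_natAdd_of_le hi'] at hNi
    omega

theorem partlyFilled_zero :
    partlyFilled l π 0 =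
      Fin.append (fun i => l (Fin.castAdd N i)) fun j => (((π j).rev : ℕ) : ℤ) := rfl

theorem partlyFilled_eq_self {m : ℕ}
    (hlπ : ∀ j : Fin N, m ≤ j → l (Fin.natAdd k j) = ((π j).rev : ℕ)) :
    partlyFilled l π m = l := by
  funext i
  rcases lt_or_ge (i : ℕ) (k + m) with hi | hi
  · exact partlyFilled_of_lt hi
  · obtain ⟨j, hj, rfl⟩ := exists_natAdd_eq_of_le hi
    rw [partlyFilled_natAdd_of_le hj, hlπ j hj]

theorem powerSumHom_derivs_partlyFilled (hl : StrictAnti l) {m : ℕ} (hm : m ≤ N) {a : ℕ → ℕ}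
    (ha : ∀ j : Fin N, (j : ℕ) < m → (a j : ℤ) = l (Fin.natAdd k j) - ((π j).rev : ℕ))
    (hlN : ∀ j : Fin N, (j : ℕ) < m → N ≤ l (Fin.natAdd k j))
    (hπ : ∀ j j' : Fin N, j ≤ j' → (j' : ℕ) < m → (π j).rev ≤ (π j').rev) :
    powerSumHom k (derivs ((List.range m).map a) (betaDet pSeries (partlyFilled l π m))) =
      powerSumHom k (betaDet pSeries (partlyFilled l π 0)) := by
  have ha0 : ∀ b ∈ (List.range m).map a, b ≠ 0 := by
    simp only [List.mem_map, List.mem_range, forall_exists_index, and_imp]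
    rintro _ n hn rfl
    have han := ha ⟨n, by omega⟩ hn
    have hlNn := hlN ⟨n, by omega⟩ hn
    simp only at han
    omega
  induction m with
  | zero => rfl
  | succ m ih =>
    let j : Fin N := ⟨m, by omega⟩
    rw [List.range_succ, List.map_append, List.map_singleton] at ha0 ⊢
    have ha0' : ∀ b ∈ (List.range m).map a, b ≠ 0 := fun b hb => ha0 b (List.mem_append_left _ hb)
    calc _ = powerSumHom k (derivs ((List.range m).map a) (betaDet pSeries (partlyFilled l π j))) :=
          powerSumHom_derivs_concat_partlyFilled hl ha0' (by simp [j]) (ha j (Nat.lt_succ_self m))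
            (hlN j (Nat.lt_succ_self m)) fun j' hj' => hπ j' j hj' (Nat.lt_succ_self m)
      _ = _ := ih (by omega) (fun i hi => ha i (Nat.lt_succ_of_lt hi))
          (fun i hi => hlN i (Nat.lt_succ_of_lt hi))
          (fun i i' hii' hi' => hπ i i' hii' (Nat.lt_succ_of_lt hi')) ha0'

theorem powerSumHom_derivs_betaDet (hl : StrictAnti l) {m : ℕ} (hm : m ≤ N) {a : ℕ → ℕ}
    (ha : ∀ j : Fin N, (j : ℕ) < m → (a j : ℤ) = l (Fin.natAdd k j) - ((π j).rev : ℕ))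
    (hlN : ∀ j : Fin N, (j : ℕ) < m → N ≤ l (Fin.natAdd k j))
    (hlπ : ∀ j : Fin N, m ≤ j → l (Fin.natAdd k j) = ((π j).rev : ℕ))
    (hπ : ∀ j j' : Fin N, j ≤ j' → (j' : ℕ) < m → (π j).rev ≤ (π j').rev) :
    powerSumHom k (derivs ((List.range m).map a) (betaDet pSeries l)) =
      (Equiv.Perm.sign π : ℤ) *
        powerSumHom k (betaDet pSeries fun i => l (Fin.castAdd N i) - N) := by
  have hfill := powerSumHom_derivs_partlyFilled hl hm ha hlN hπ
  rw [partlyFilled_eq_self hlπ, partlyFilled_zero] at hfill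
  rw [hfill, betaDet_append_perm_rev constantCoeff_pSeries, map_mul, map_intCast]

end Filling

section GapSequences

variable {G : Finset ℕ} {g k : ℕ}

theorem wseq_eq_nth (G : Finset ℕ) (i : ℕ) : wseq G i = Nat.nth (· ∈ G) i := by
  have hf : (Set.ofPred (· ∈ G)).Finite := G.finite_toSet
  have hG : hf.toFinset = G := by
    ext x
    simp
  rw [wseq, Nat.nth_eq_getD_sort hf, hG]

theorem lt_card_toFinset_ofPred_mem {i : ℕ} (hi : i < G.card)
    (hf : (Set.ofPred (· ∈ G)).Finite) : i < hf.toFinset.card := by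
  convert hi
  ext x
  simp

theorem le_wseq {i : ℕ} (hi : i < G.card) : i ≤ wseq G i := by
  rw [wseq_eq_nth]
  exact Nat.le_nth (lt_card_toFinset_ofPred_mem hi)

theorem count_mem_add_gapm (G : Finset ℕ) (g k : ℕ) :
    Nat.count (· ∈ G) (g - k) + gapm G g k = g - k := by
  rw [gapm, Nat.count_eq_card_filter_range, Finset.card_filter_add_card_filter_not,
    Finset.card_range]

theorem wseq_lt {i : ℕ} (hi : i + gapm G g k < g - k) : wseq G i < g - k := by
  rw [wseq_eq_nth]
  have := count_mem_add_gapm G g k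
  exact Nat.nth_lt_of_lt_count (by omega)

theorem le_wseq_of_lt_gapm {j : ℕ} (hj : j < gapm G g k) (hG : g - k ≤ G.card) :
    g - k ≤ wseq G (g - k - j - 1) := by
  have hcount := count_mem_add_gapm G g k
  have hfin := fun hf => lt_card_toFinset_ofPred_mem (i := g - k - j - 1) (G := G) (by omega) hf
  by_contra! hlt
  rw [wseq_eq_nth] at hlt
  have := Nat.count_strict_mono (Nat.nth_mem _ hfin) hlt
  rw [Nat.count_nth hfin] at this
  omega

theorem wstar_lt {j : ℕ} (hj : j < gapm G g k) : wstar G j < g - k := by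
  rw [gapm, ← Nat.count_eq_card_filter_range] at hj
  exact Nat.nth_lt_of_lt_count hj

theorem wstar_monotone (G : Finset ℕ) : Monotone (wstar G) :=
  Nat.nth_monotone G.finite_toSet.infinite_compl

theorem cast_gapa {j : ℕ} (hj : j < gapm G g k) (hG : g - k ≤ G.card) :
    (gapa G g k j : ℤ) = wseq G (g - k - j - 1) - wstar G j :=
  Nat.cast_sub ((wstar_lt hj).le.trans (le_wseq_of_lt_gapm hj hG))

theorem gapPart_add {a : ℕ} (ha : g - 1 - a < G.card) :
    gapPart G g a + (g - 1 - a) = wseq G (g - 1 - a) :=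
  Nat.sub_add_cancel (le_wseq ha)

theorem ite_wstar_wseq_lt {j : ℕ} (hj : j < g - k) :
    (if j < gapm G g k then wstar G j else wseq G (g - k - j - 1)) < g - k := by
  split_ifs with h
  · exact wstar_lt h
  · exact wseq_lt (by omega)

theorem val_rev_eq_ite_wstar_wseq {i j : Fin (g - k)}
    (hi : (i : ℕ) = g - k - 1 - (if (j : ℕ) < gapm G g k then wstar G j
      else wseq G (g - k - j - 1))) :
    (i.rev : ℕ) = if (j : ℕ) < gapm G g k then wstar G j else wseq G (g - k - j - 1) := by
  have := ite_wstar_wseq_lt (G := G) j.isLt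
  rw [Fin.val_rev, hi]
  omega

end GapSequences

theorem add_rev_natAdd_eq_wseq {G : Finset ℕ} {k N : ℕ} (hcard : G.card = k + N)
    {mu : Fin (k + N) → ℕ} (hmueq : ∀ a : Fin (k + N), k ≤ (a : ℕ) → mu a = gapPart G (k + N) a)
    (j : Fin N) :
    (mu (Fin.natAdd k j) : ℤ) + ((Fin.natAdd k j).rev : ℕ) = wseq G (k + N - k - j - 1) := by
  have hpart := gapPart_add (G := G) (g := k + N) (a := k + j) (by omega)
  rw [show k + N - 1 - (k + j) = k + N - k - j - 1 by omega] at hpart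
  rw [hmueq _ (by simp), ← hpart, Fin.val_natAdd, Fin.val_rev, Fin.val_natAdd]
  push_cast
  omega

theorem strictAnti_add_rev {g : ℕ} {mu : Fin g → ℕ} (hmu : Antitone mu) :
    StrictAnti fun i => (mu i : ℤ) + (i.rev : ℕ) := fun i j hij => by
  have := hmu hij.le
  have : (j.rev : ℕ) < i.rev := Fin.rev_lt_rev.2 hij
  simp only
  omega

theorem schur_pad_castAdd {k N : ℕ} (mu : Fin (k + N) → ℕ) :
    schur (fun i : Fin k => pad mu i) = betaDet pSeries fun i : Fin k =>
      (mu (Fin.castAdd N i) : ℤ) + ((Fin.castAdd N i).rev : ℕ) - N := by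
  rw [schur_eq_betaDet]
  congr 1
  funext i
  have hpad : pad mu i = mu (Fin.castAdd N i) := dif_pos (Nat.lt_add_right N i.isLt)
  rw [hpad, Fin.rev_castAdd, Fin.val_addNat]
  push_cast
  ring

theorem statement9_general (g : ℕ) (G : Finset ℕ) (hcard : G.card = g) (k : ℕ) (hk : k ≤ g)
    (mu : Fin g → ℕ) (hmu : Antitone mu)
    (hmueq : ∀ a : Fin g, k ≤ (a : ℕ) → mu a = gapPart G g a)
    (π : Equiv.Perm (Fin (g - k)))
    (hπ : ∀ j : Fin (g - k), ((π j : ℕ))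
        = g - k - 1 - (if (j : ℕ) < gapm G g k then wstar G j
            else wseq G (g - k - (j : ℕ) - 1))) :
    toPowerSums k (derivs ((List.range (gapm G g k)).map (gapa G g k)) (schur mu))
      = ((Equiv.Perm.sign π : ℤ) : ℚ)
          • toPowerSums k (schur (fun a : Fin k => pad mu a)) := by
  obtain ⟨N, rfl⟩ := Nat.exists_eq_add_of_le hk
  have hrow := add_rev_natAdd_eq_wseq hcard hmueq
  have hrev := fun j => val_rev_eq_ite_wstar_wseq (hπ j)
  have hm := count_mem_add_gapm G (k + N) k
  have hle (j : ℕ) (hj : j < gapm G (k + N) k) := le_wseq_of_lt_gapm hj (by omega)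
  have hgapa (j : ℕ) (hj : j < gapm G (k + N) k) := cast_gapa hj (by omega)
  generalize hN : k + N - k = N' at *
  obtain rfl : N' = N := by omega
  rw [toPowerSums_eq_powerSumHom, schur_eq_betaDet, schur_pad_castAdd, Int.cast_smul_eq_zsmul,
    zsmul_eq_mul]
  refine powerSumHom_derivs_betaDet (strictAnti_add_rev hmu) (by omega) (fun j hj => ?_)
    (fun j hj => ?_) (fun j hj => ?_) fun j j' hjj' hj' => ?_
  · rw [hgapa j hj, hrow, hrev, if_pos hj]
  · rw [hrow]
    exact_mod_cast hle j hj
  · rw [hrow, hrev, if_neg hj.not_gt]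
  · rw [Fin.le_def, hrev, hrev, if_pos hj', if_pos ((Fin.le_def.1 hjj').trans_lt hj')]
    exact wstar_monotone G hjj'

/-- Let `λ` be the partition associated to a gap sequence `G` of genus `g`,
`0 ≤ k ≤ g-1`, and `μ = (μ_1,...,μ_g)` any partition with `μ_i = λ_i` for `k+1 ≤ i ≤ g`.
Then `∂_{a^{(k)}_1} ⋯ ∂_{a^{(k)}_{m_k}} s_μ` at `t = [x_1]+⋯+[x_k]` equals
`c_k · s_{(μ_1,...,μ_k)}([x_1]+⋯+[x_k])` with the same sign `c_k` as in the previous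
statement (encoded by the permutation `π` with `π j = g-k-1 - v_j`). -/
theorem statement9 (g : ℕ) (hg : 1 ≤ g) (G : Finset ℕ)
    (hcard : G.card = g) (h0 : 0 ∉ G)
    (hadd : ∀ a b : ℕ, a ∉ G → b ∉ G → a + b ∉ G)
    (k : ℕ) (hk : k < g)
    (mu : Fin g → ℕ) (hmu : Antitone mu)
    (hmueq : ∀ a : Fin g, k ≤ (a : ℕ) → mu a = gapPart G g a)
    (π : Equiv.Perm (Fin (g - k)))
    (hπ : ∀ j : Fin (g - k), ((π j : ℕ))
        = g - k - 1 - (if (j : ℕ) < gapm G g k then wstar G j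
            else wseq G (g - k - (j : ℕ) - 1))) :
    toPowerSums k (derivs ((List.range (gapm G g k)).map (gapa G g k)) (schur mu))
      = ((Equiv.Perm.sign π : ℤ) : ℚ)
          • toPowerSums k (schur (fun a : Fin k => pad mu a)) :=
  statement9_general g G hcard k hk.le mu hmu hmueq π hπ
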